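/- Let n be a positive integer, let σ and σ' be decorated permutations of order n, and let a < b < c < a + n be integers. Suppose (a b) is an allowed boundary transposition for σ, (b c) is an allowed boundary transposition for σ', σ ∘ t_{a,b} = σ' ∘ t_{b,c}, and for every integer q with a < q < b or b < q < c one has σ(q) ∈ {q, q + n}. Set σ̃ = σ ∘ t_{b,c}, σ̃' = σ' ∘ t_{a,b}, and ρ = σ ∘ t_{b,c} ∘ t_{a,b}. Then σ̃, σ̃', and ρ are decorated permutations of order n; (b c) is an allowed boundary transposition for σ̃ with σ̃ ∘ t_{b,c} = σ; (a b) is an allowed boundary transposition for σ̃' with σ̃' ∘ t_{a,b} = σ'; (a b) is an allowed boundary transposition for ρ with ρ ∘ t_{a,b} = σ̃; (b c) is an allowed boundary transposition for ρ with ρ ∘ t_{b,c} = σ̃'; in particular σ ∘ t_{b,c} ∘ t_{a,b} = σ' ∘ t_{a,b} ∘ t_{b,c}, so σ and σ' have a common grandparent in the poset of decorated permutations. -/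

import Mathlib

/-- A decorated permutation of order `n`: a bijection `σ : ℤ → ℤ` with
`σ (i + n) = σ i + n` and `i ≤ σ i ≤ i + n` for all `i`. -/
def IsDecoratedPerm (n : ℤ) (σ : ℤ → ℤ) : Prop :=
  Function.Bijective σ ∧ (∀ i : ℤ, σ (i + n) = σ i + n) ∧ ∀ i : ℤ, i ≤ σ i ∧ σ i ≤ i + n

/-- The affine transposition `t_{a,b}`: swaps `a + m*n` and `b + m*n` for every `m : ℤ`
and fixes all integers not congruent to `a` or `b` modulo `n`. -/
def affT (n a b : ℤ) (i : ℤ) : ℤ :=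
  if (i - a) % n = 0 then i + (b - a)
  else if (i - b) % n = 0 then i - (b - a)
  else i

/-- `(a b)` is an allowed boundary transposition for `σ`: `a < b < a + n`,
`b ≤ σ a < σ b ≤ a + n`, and there is no `q` with `a < q < b` and `σ a < σ q < σ b`. -/
def AllowedBT (n : ℤ) (σ : ℤ → ℤ) (a b : ℤ) : Prop :=
  a < b ∧ b < a + n ∧ b ≤ σ a ∧ σ a < σ b ∧ σ b ≤ a + n ∧
    ¬ ∃ q : ℤ, a < q ∧ q < b ∧ σ a < σ q ∧ σ q < σ b

/-! On the positions `a, b, c` the hypotheses give `c ≤ σ c < σ a < σ b ≤ a + n`, and `σ'` takes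
there the values `σ b, σ c, σ a`. A pair of positions carrying decreasing values can be sorted, and
this leads to a parent as soon as the positions in between are decorated fixed points, whose values
never lie between the two that are swapped. Sorting the three values of `σ` with `(b c)` and then
`(a b)`, or those of `σ'` with `(a b)` and then `(b c)`, ends at the same `ρ` by the braid
relation for affine transpositions. -/

section AffineTransposition

variable {n a b c i : ℤ}

theorem not_modEq_of_mem_Ico {m x y : ℤ} (hx : x ∈ Set.Ico m (m + n))
    (hy : y ∈ Set.Ico m (m + n)) (hxy : x ≠ y) : ¬x ≡ y [ZMOD n] := by
  intro h
  have habs : |y - x| < n := abs_sub_lt_iff.2 ⟨by linarith [hx.1, hy.2], by linarith [hx.2, hy.1]⟩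
  exact hxy (sub_eq_zero.1 (Int.eq_zero_of_abs_lt_dvd h.dvd habs)).symm

theorem not_modEq_of_lt (hab : a < b) (hba : b < a + n) : ¬a ≡ b [ZMOD n] :=
  not_modEq_of_mem_Ico ⟨le_rfl, hab.trans hba⟩ ⟨hab.le, hba⟩ hab.ne

theorem add_sub_modEq_of_modEq (h : i ≡ a [ZMOD n]) : i + (b - a) ≡ b [ZMOD n] := by
  simpa only [add_sub_cancel] using h.add_right (b - a)

theorem affT_of_modEq_left (h : i ≡ a [ZMOD n]) : affT n a b i = i + (b - a) :=
  if_pos (Int.emod_eq_zero_of_dvd h.symm.dvd)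

theorem affT_of_modEq_right (ha : ¬i ≡ a [ZMOD n]) (hb : i ≡ b [ZMOD n]) :
    affT n a b i = i + (a - b) := by
  have hia : ¬(i - a) % n = 0 := fun h =>
    ha (Int.modEq_iff_dvd.2 (Int.dvd_of_emod_eq_zero h)).symm
  rw [affT, if_neg hia, if_pos (Int.emod_eq_zero_of_dvd hb.symm.dvd)]
  ring

theorem affT_of_not_modEq (ha : ¬i ≡ a [ZMOD n]) (hb : ¬i ≡ b [ZMOD n]) : affT n a b i = i :=
  (if_neg fun h => ha (Int.modEq_iff_dvd.2 (Int.dvd_of_emod_eq_zero h)).symm).trans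
    (if_neg fun h => hb (Int.modEq_iff_dvd.2 (Int.dvd_of_emod_eq_zero h)).symm)

theorem affT_of_mem_Ico {m : ℤ} (ha : a ∈ Set.Ico m (m + n)) (hb : b ∈ Set.Ico m (m + n))
    (hi : i ∈ Set.Ico m (m + n)) (hia : i ≠ a) (hib : i ≠ b) : affT n a b i = i :=
  affT_of_not_modEq (not_modEq_of_mem_Ico hi ha hia) (not_modEq_of_mem_Ico hi hb hib)

theorem affT_left (n a b : ℤ) : affT n a b a = b := by
  rw [affT_of_modEq_left rfl, add_sub_cancel]

theorem affT_right (hab : ¬a ≡ b [ZMOD n]) : affT n a b b = a := by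
  rw [affT_of_modEq_right (fun h => hab h.symm) rfl, add_sub_cancel]

theorem affT_add_period (n a b i : ℤ) : affT n a b (i + n) = affT n a b i + n := by
  simp only [affT, add_sub_right_comm, Int.add_emod_right]
  split_ifs <;> ring

theorem affT_involutive (hab : ¬a ≡ b [ZMOD n]) : Function.Involutive (affT n a b) := by
  intro i
  by_cases ha : i ≡ a [ZMOD n]
  · have hb : i + (b - a) ≡ b [ZMOD n] := add_sub_modEq_of_modEq ha
    have ha' : ¬i + (b - a) ≡ a [ZMOD n] := fun h => hab (h.symm.trans hb)
    rw [affT_of_modEq_left ha, affT_of_modEq_right ha' hb]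
    ring
  by_cases hb : i ≡ b [ZMOD n]
  · have ha' : i + (a - b) ≡ a [ZMOD n] := add_sub_modEq_of_modEq hb
    rw [affT_of_modEq_right ha hb, affT_of_modEq_left ha']
    ring
  · simp only [affT_of_not_modEq ha hb]

theorem comp_affT_comp_affT_self {α : Type*} (hab : ¬a ≡ b [ZMOD n]) (f : ℤ → α) :
    (f ∘ affT n a b) ∘ affT n a b = f := by
  rw [Function.comp_assoc, (affT_involutive hab).comp_self, Function.comp_id]

section Equivariant

variable {f : ℤ → ℤ}

theorem map_sub_map_of_modEq (hf : ∀ i, f (i + n) = f i + n) {j : ℤ}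
    (h : i ≡ j [ZMOD n]) : f i - f j = i - j := by
  obtain ⟨k, rfl⟩ := Int.modEq_iff_add_fac.1 h.symm
  have hshift := AddConstMapClass.map_add_zsmul (⟨f, hf⟩ : AddConstMap ℤ ℤ n n) j k
  simpa only [AddConstMap.coe_mk, smul_eq_mul, mul_comm k, add_sub_cancel_left,
    sub_eq_iff_eq_add'] using hshift

theorem map_modEq_map_iff (hf : ∀ i, f (i + n) = f i + n) (hinj : Function.Injective f)
    {j : ℤ} : f i ≡ f j [ZMOD n] ↔ i ≡ j [ZMOD n] := by
  refine ⟨fun h => ?_, fun h => ?_⟩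
  · have hmod : j + (f i - f j) ≡ j [ZMOD n] := by
      simpa only [sub_self, add_zero] using (h.sub_right (f j)).add_left j
    have hi : j + (f i - f j) = i := hinj (by linarith [map_sub_map_of_modEq hf hmod])
    rwa [hi] at hmod
  · rw [Int.modEq_iff_dvd, map_sub_map_of_modEq hf h.symm]
    exact h.dvd

theorem map_affT (hf : ∀ i, f (i + n) = f i + n) (hinj : Function.Injective f) (a b i : ℤ) :
    f (affT n a b i) = affT n (f a) (f b) (f i) := by
  by_cases ha : i ≡ a [ZMOD n]
  · have hb : i + (b - a) ≡ b [ZMOD n] := add_sub_modEq_of_modEq ha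
    rw [affT_of_modEq_left ha, affT_of_modEq_left ((map_modEq_map_iff hf hinj).2 ha)]
    linarith [map_sub_map_of_modEq hf ha, map_sub_map_of_modEq hf hb]
  have hfa : ¬f i ≡ f a [ZMOD n] := mt (map_modEq_map_iff hf hinj).1 ha
  by_cases hb : i ≡ b [ZMOD n]
  · have ha' : i + (a - b) ≡ a [ZMOD n] := add_sub_modEq_of_modEq hb
    rw [affT_of_modEq_right ha hb,
      affT_of_modEq_right hfa ((map_modEq_map_iff hf hinj).2 hb)]
    linarith [map_sub_map_of_modEq hf hb, map_sub_map_of_modEq hf ha']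
  · rw [affT_of_not_modEq ha hb,
      affT_of_not_modEq hfa (mt (map_modEq_map_iff hf hinj).1 hb)]

end Equivariant

theorem affT_braid (hab : ¬a ≡ b [ZMOD n]) (hac : ¬a ≡ c [ZMOD n]) (hbc : ¬b ≡ c [ZMOD n]) :
    affT n a b ∘ affT n b c ∘ affT n a b = affT n b c ∘ affT n a b ∘ affT n b c := by
  funext i
  have hc : affT n a b c = c := affT_of_not_modEq (fun h => hac h.symm) (fun h => hbc h.symm)
  calc affT n a b (affT n b c (affT n a b i))
      = affT n a c i := by
        rw [map_affT (affT_add_period n a b) (affT_involutive hab).injective, affT_right hab, hc,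
          affT_involutive hab]
    _ = affT n b c (affT n a b (affT n b c i)) := by
        rw [map_affT (affT_add_period n b c) (affT_involutive hbc).injective, affT_left,
          affT_of_not_modEq hab hac, affT_involutive hbc]

theorem comp_affT_comp_affT_eq_of_comp_affT_eq {α : Type*} {f g : ℤ → α}
    (hab : ¬a ≡ b [ZMOD n]) (hac : ¬a ≡ c [ZMOD n]) (hbc : ¬b ≡ c [ZMOD n])
    (hfg : f ∘ affT n a b = g ∘ affT n b c) :
    (f ∘ affT n b c) ∘ affT n a b = (g ∘ affT n a b) ∘ affT n b c := by
  have hg : g = (f ∘ affT n a b) ∘ affT n b c := by rw [hfg, comp_affT_comp_affT_self hbc]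
  calc (f ∘ affT n b c) ∘ affT n a b
      = f ∘ (affT n b c ∘ affT n a b ∘ affT n b c) ∘ affT n b c := by
        simp only [Function.comp_assoc, (affT_involutive hbc).comp_self, Function.comp_id]
    _ = (g ∘ affT n a b) ∘ affT n b c := by
        rw [← affT_braid hab hac hbc, hg]
        simp only [Function.comp_assoc]

end AffineTransposition

/-- A decorated fixed point: `σ` is the identity at `q` up to the choice between the two
decorations `q` and `q + n` of a fixed point modulo `n`. -/
def IsDecoratedFixedPt (n : ℤ) (σ : ℤ → ℤ) (q : ℤ) : Prop :=
  σ q = q ∨ σ q = q + n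

/-- `τ` is a parent of `σ` through `(a b)`: an allowed boundary transposition of the decorated
permutation `τ` yields `σ`. -/
def IsParent (n a b : ℤ) (τ σ : ℤ → ℤ) : Prop :=
  IsDecoratedPerm n τ ∧ AllowedBT n τ a b ∧ τ ∘ affT n a b = σ

section Parents

variable {n a b c : ℤ} {σ : ℤ → ℤ}

theorem allowedBT_of_isDecoratedFixedPt (hab : a < b) (hb : b ≤ σ a) (hlt : σ a < σ b)
    (ha : σ b ≤ a + n) (hfix : ∀ q ∈ Set.Ioo a b, IsDecoratedFixedPt n σ q) :
    AllowedBT n σ a b := by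
  refine ⟨hab, by linarith, hb, hlt, ha, ?_⟩
  rintro ⟨q, haq, hqb, hlo, hhi⟩
  rcases hfix q ⟨haq, hqb⟩ with hq | hq <;> linarith

theorem IsDecoratedPerm.comp_affT (hσ : IsDecoratedPerm n σ) (hab : ¬a ≡ b [ZMOD n])
    (ha : σ b ∈ Set.Icc a (a + n)) (hb : σ a ∈ Set.Icc b (b + n)) :
    IsDecoratedPerm n (σ ∘ affT n a b) := by
  obtain ⟨hbij, hshift, hbound⟩ := hσ
  refine ⟨hbij.comp (affT_involutive hab).bijective, fun i => ?_, fun i => ?_⟩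
  · simp only [Function.comp_apply, affT_add_period, hshift]
  rw [Function.comp_apply]
  by_cases hia : i ≡ a [ZMOD n]
  · have hib : i + (b - a) ≡ b [ZMOD n] := add_sub_modEq_of_modEq hia
    rw [affT_of_modEq_left hia]
    grind [map_sub_map_of_modEq hshift hib]
  by_cases hib : i ≡ b [ZMOD n]
  · have hia' : i + (a - b) ≡ a [ZMOD n] := add_sub_modEq_of_modEq hib
    rw [affT_of_modEq_right hia hib]
    grind [map_sub_map_of_modEq hshift hia']
  · rw [affT_of_not_modEq hia hib]
    exact hbound i

theorem IsDecoratedFixedPt.comp_affT {q : ℤ} (h : IsDecoratedFixedPt n σ q)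
    (hq : affT n a b q = q) : IsDecoratedFixedPt n (σ ∘ affT n a b) q := by
  rwa [IsDecoratedFixedPt, Function.comp_apply, hq]

theorem IsDecoratedPerm.isParent_comp_affT (hσ : IsDecoratedPerm n σ) (hab : a < b)
    (hb : b ≤ σ b) (hlt : σ b < σ a) (ha : σ a ≤ a + n)
    (hfix : ∀ q ∈ Set.Ioo a b, IsDecoratedFixedPt n σ q) :
    IsParent n a b (σ ∘ affT n a b) σ := by
  have hba : b < a + n := by linarith
  have hmod : ¬a ≡ b [ZMOD n] := not_modEq_of_lt hab hba
  have hleft : (σ ∘ affT n a b) a = σ b := congrArg σ (affT_left n a b)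
  have hright : (σ ∘ affT n a b) b = σ a := congrArg σ (affT_right hmod)
  refine ⟨hσ.comp_affT hmod ⟨by linarith, by linarith⟩ ⟨by linarith, by linarith⟩,
    allowedBT_of_isDecoratedFixedPt hab ?_ ?_ ?_ fun q hq => (hfix q hq).comp_affT ?_,
    comp_affT_comp_affT_self hmod σ⟩
  · rwa [hleft]
  · rwa [hleft, hright]
  · rwa [hright]
  · exact affT_of_mem_Ico ⟨le_rfl, hab.trans hba⟩ ⟨hab.le, hba⟩
      ⟨hq.1.le, hq.2.trans hba⟩ hq.1.ne' hq.2.ne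

theorem IsDecoratedPerm.isParent_isParent_of_min_right (hσ : IsDecoratedPerm n σ) (hab : a < b)
    (hbc : b < c) (hc : c ≤ σ c) (hca : σ c < σ a) (hcb : σ c < σ b) (ha : σ a ≤ a + n)
    (hb : σ b ≤ b + n) (hfix_ab : ∀ q ∈ Set.Ioo a b, IsDecoratedFixedPt n σ q)
    (hfix_bc : ∀ q ∈ Set.Ioo b c, IsDecoratedFixedPt n σ q) :
    IsParent n b c (σ ∘ affT n b c) σ ∧
      IsParent n a b ((σ ∘ affT n b c) ∘ affT n a b) (σ ∘ affT n b c) := by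
  have hparent := hσ.isParent_comp_affT hbc hc hcb hb hfix_bc
  have hfixed {q : ℤ} (haq : a ≤ q) (hqb : q < b) : affT n b c q = q := by
    apply affT_of_mem_Ico (m := a) <;> grind
  have ha' : (σ ∘ affT n b c) a = σ a := congrArg σ (hfixed le_rfl hab)
  have hb' : (σ ∘ affT n b c) b = σ c := congrArg σ (affT_left n b c)
  refine ⟨hparent, hparent.1.isParent_comp_affT hab ?_ ?_ ?_ fun q hq =>
    (hfix_ab q hq).comp_affT (hfixed hq.1.le hq.2)⟩
  · rw [hb']
    linarith
  · rwa [ha', hb']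
  · rwa [ha']

theorem IsDecoratedPerm.isParent_isParent_of_max_left (hσ : IsDecoratedPerm n σ) (hab : a < b)
    (hbc : b < c) (hb : b ≤ σ b) (hc : c ≤ σ c) (hba : σ b < σ a) (hca : σ c < σ a)
    (ha : σ a ≤ a + n) (hfix_ab : ∀ q ∈ Set.Ioo a b, IsDecoratedFixedPt n σ q)
    (hfix_bc : ∀ q ∈ Set.Ioo b c, IsDecoratedFixedPt n σ q) :
    IsParent n a b (σ ∘ affT n a b) σ ∧
      IsParent n b c ((σ ∘ affT n a b) ∘ affT n b c) (σ ∘ affT n a b) := by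
  have hparent := hσ.isParent_comp_affT hab hb hba ha hfix_ab
  have hfixed {q : ℤ} (hbq : b < q) (hqc : q ≤ c) : affT n a b q = q := by
    apply affT_of_mem_Ico (m := a) <;> grind
  have hb' : (σ ∘ affT n a b) b = σ a :=
    congrArg σ (affT_right (not_modEq_of_lt hab (by linarith)))
  have hc' : (σ ∘ affT n a b) c = σ c := congrArg σ (hfixed hbc le_rfl)
  refine ⟨hparent, hparent.1.isParent_comp_affT hbc ?_ ?_ ?_ fun q hq =>
    (hfix_bc q hq).comp_affT (hfixed hq.1 hq.2.le)⟩
  · rwa [hc']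
  · rwa [hb', hc']
  · rw [hb']
    linarith

theorem apply_eq_of_comp_affT_eq {α : Type*} {f g : ℤ → α} (hab : a < b) (hbc : b < c)
    (hca : c < a + n) (hfg : f ∘ affT n a b = g ∘ affT n b c) :
    g a = f b ∧ g b = f c ∧ g c = f a ∧ ∀ q ∈ Set.Ioo a c, q ≠ b → g q = f q := by
  have hleft (q : ℤ) (haq : a ≤ q) (hqc : q < c) (hqb : q ≠ b) : affT n b c q = q := by
    apply affT_of_mem_Ico (m := a) <;> grind
  have hright (q : ℤ) (haq : a < q) (hqc : q ≤ c) (hqb : q ≠ b) : affT n a b q = q := by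
    apply affT_of_mem_Ico (m := a) <;> grind
  have hb : affT n a b b = a := affT_right (not_modEq_of_lt hab (by linarith))
  have hc : affT n b c c = b := affT_right (not_modEq_of_lt hbc (by linarith))
  have hpt (q : ℤ) : f (affT n a b q) = g (affT n b c q) := congrFun hfg q
  refine ⟨?_, ?_, ?_, fun q hq hqb => ?_⟩
  · simpa only [affT_left, hleft a le_rfl (hab.trans hbc) hab.ne] using (hpt a).symm
  · simpa only [hc, hright c (hab.trans hbc) le_rfl hbc.ne'] using (hpt c).symm
  · simpa only [affT_left, hb] using (hpt b).symm
  · simpa only [hleft q hq.1.le hq.2 hqb, hright q hq.1 hq.2.le hqb] using (hpt q).symm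

end Parents

/-- Case `(a b)` vs `(b c)` with `a < b < c < a + n` for adjacent charts:
`σ` and `σ'` have a common grandparent `ρ = σ ∘ t_{b,c} ∘ t_{a,b} = σ' ∘ t_{a,b} ∘ t_{b,c}`. -/
theorem common_grandparent_ab_bc (n : ℤ) (hn : 0 < n) (σ σ' : ℤ → ℤ)
    (hσ : IsDecoratedPerm n σ) (hσ' : IsDecoratedPerm n σ')
    (a b c : ℤ) (hab : a < b) (hbc : b < c) (hca : c < a + n)
    (h1 : AllowedBT n σ a b) (h2 : AllowedBT n σ' b c)
    (heq : σ ∘ affT n a b = σ' ∘ affT n b c)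
    (hadj : ∀ q : ℤ, (a < q ∧ q < b) ∨ (b < q ∧ q < c) → σ q = q ∨ σ q = q + n) :
    IsDecoratedPerm n (σ ∘ affT n b c) ∧
    IsDecoratedPerm n (σ' ∘ affT n a b) ∧
    IsDecoratedPerm n ((σ ∘ affT n b c) ∘ affT n a b) ∧
    (AllowedBT n (σ ∘ affT n b c) b c ∧ (σ ∘ affT n b c) ∘ affT n b c = σ) ∧
    (AllowedBT n (σ' ∘ affT n a b) a b ∧ (σ' ∘ affT n a b) ∘ affT n a b = σ') ∧
    (AllowedBT n ((σ ∘ affT n b c) ∘ affT n a b) a b ∧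
      ((σ ∘ affT n b c) ∘ affT n a b) ∘ affT n a b = σ ∘ affT n b c) ∧
    (AllowedBT n ((σ ∘ affT n b c) ∘ affT n a b) b c ∧
      ((σ ∘ affT n b c) ∘ affT n a b) ∘ affT n b c = σ' ∘ affT n a b) ∧
    (σ ∘ affT n b c) ∘ affT n a b = (σ' ∘ affT n a b) ∘ affT n b c := by
  obtain ⟨-, -, -, hσab, hσb, -⟩ := h1
  obtain ⟨-, -, hσ'b, hσ'bc, -, -⟩ := h2
  obtain ⟨ha', hb', hc', hq'⟩ := apply_eq_of_comp_affT_eq hab hbc hca heq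
  rw [hb'] at hσ'b hσ'bc
  rw [hc'] at hσ'bc
  have hfix_ab : ∀ q ∈ Set.Ioo a b, IsDecoratedFixedPt n σ q := fun q hq => hadj q (.inl hq)
  have hfix_bc : ∀ q ∈ Set.Ioo b c, IsDecoratedFixedPt n σ q := fun q hq => hadj q (.inr hq)
  have hfix_ab' : ∀ q ∈ Set.Ioo a b, IsDecoratedFixedPt n σ' q := fun q hq => by
    rw [IsDecoratedFixedPt, hq' q ⟨hq.1, hq.2.trans hbc⟩ hq.2.ne]
    exact hfix_ab q hq
  have hfix_bc' : ∀ q ∈ Set.Ioo b c, IsDecoratedFixedPt n σ' q := fun q hq => by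
    rw [IsDecoratedFixedPt, hq' q ⟨hab.trans hq.1, hq.2⟩ hq.1.ne']
    exact hfix_bc q hq
  obtain ⟨⟨hdec, hbt⟩, hdecρ, hbtρ⟩ := hσ.isParent_isParent_of_min_right hab hbc hσ'b hσ'bc
    (by linarith) (by linarith) (by linarith) hfix_ab hfix_bc
  obtain ⟨⟨hdec', hbt'⟩, -, hbtρ'⟩ := hσ'.isParent_isParent_of_max_left hab hbc
    (by linarith) (by linarith) (by linarith) (by linarith) (by linarith) hfix_ab' hfix_bc'
  have hρ := comp_affT_comp_affT_eq_of_comp_affT_eq (not_modEq_of_lt hab (by linarith))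
    (not_modEq_of_lt (hab.trans hbc) hca) (not_modEq_of_lt hbc (by linarith)) heq
  exact ⟨hdec, hdec', hdecρ, hbt, hbt', hbtρ, hρ ▸ hbtρ', hρ⟩
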